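/- Let C be a group system, t ∈ ℤ, and k ≥ 1. Let S ⊆ C^{[t,t+k]} be a transversal of the granule, i.e., the quotient map C^{[t,t+k]} → C^{[t,t+k]}/(C^{[t,t+k−1]}C^{[t+1,t+k]}) restricted to S is a bijection onto the granule Γ^{[t,t+k]}. Then for every j with 0 ≤ j ≤ k, β^{t+j}(D_{k−1}^t) is normal in β^{t+j}(D_k^t), each β^{t+j}(a) for a ∈ S lies in β^{t+j}(D_k^t), and the map a ↦ β^{t+j}(a)·β^{t+j}(D_{k−1}^t) is a bijection from S onto the quotient group β^{t+j}(D_k^t)/β^{t+j}(D_{k−1}^t); that is, the (t+j)-th branch components of a set of generators form a transversal of the corresponding quotient, and all these quotients have the same number of elements. -/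

import Mathlib

open scoped Pointwise

namespace GroupSystemPaper

variable {A : ℤ → Type*} [∀ t, Group (A t)]

/-- `C^{t+}` : codewords of the group system `C` that are the identity before time `t`. -/
def Cplus (C : Subgroup (∀ t, A t)) (t : ℤ) : Subgroup C where
  carrier := {a | ∀ n < t, (a : ∀ s, A s) n = 1}
  one_mem' := by intro n hn; simp
  mul_mem' := by intro a b ha hb n hn; simp [ha n hn, hb n hn]
  inv_mem' := by intro a ha n hn; simp [ha n hn]

/-- `C^{t−}` : codewords of the group system `C` that are the identity from time `t` on. -/
def Cminus (C : Subgroup (∀ t, A t)) (t : ℤ) : Subgroup C where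
  carrier := {a | ∀ n, t ≤ n → (a : ∀ s, A s) n = 1}
  one_mem' := by intro n hn; simp
  mul_mem' := by intro a b ha hb n hn; simp [ha n hn, hb n hn]
  inv_mem' := by intro a ha n hn; simp [ha n hn]

/-- `C^{[t₁,t₂]}` : codewords supported on the interval `[t₁, t₂]`. -/
def Cint (C : Subgroup (∀ t, A t)) (t₁ t₂ : ℤ) : Subgroup C :=
  Cplus C t₁ ⊓ Cminus C (t₂ + 1)

instance Cplus_normal (C : Subgroup (∀ t, A t)) (t : ℤ) : (Cplus C t).Normal := by
  constructor
  intro x hx g n hn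
  have h1 : (x : ∀ s, A s) n = 1 := hx n hn
  simp [h1]

instance Cminus_normal (C : Subgroup (∀ t, A t)) (t : ℤ) : (Cminus C t).Normal := by
  constructor
  intro x hx g n hn
  have h1 : (x : ∀ s, A s) n = 1 := hx n hn
  simp [h1]

instance Cint_normal (C : Subgroup (∀ t, A t)) (t₁ t₂ : ℤ) : (Cint C t₁ t₂).Normal := by
  constructor
  intro x hx g
  rcases Subgroup.mem_inf.mp hx with ⟨h1, h2⟩
  exact Subgroup.mem_inf.mpr
    ⟨(Cplus_normal C t₁).conj_mem _ h1 g, (Cminus_normal C (t₂ + 1)).conj_mem _ h2 g⟩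

/-- The normal subgroup `C^{t−}C^{t+}` of `C`. -/
def stateN (C : Subgroup (∀ t, A t)) (t : ℤ) : Subgroup C :=
  Cminus C t ⊔ Cplus C t

instance stateN_normal (C : Subgroup (∀ t, A t)) (t : ℤ) : (stateN C t).Normal :=
  Subgroup.sup_normal _ _

/-- The canonical state space `Σ^t = C/(C^{t−}C^{t+})`. -/
abbrev State (C : Subgroup (∀ t, A t)) (t : ℤ) : Type _ :=
  ↥C ⧸ stateN C t

/-- The state projection `σ^t : C → Σ^t`. -/
def sigma (C : Subgroup (∀ t, A t)) (t : ℤ) : ↥C →* State C t :=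
  QuotientGroup.mk' (stateN C t)

/-- The evaluation homomorphism `χ^t : C → A^t`. -/
def evalHom (C : Subgroup (∀ t, A t)) (t : ℤ) : ↥C →* A t :=
  (Pi.evalMonoidHom A t).comp C.subtype

/-- The branch homomorphism `β^t : C → Σ^t × A^t × Σ^{t+1}`. -/
def beta (C : Subgroup (∀ t, A t)) (t : ℤ) :
    ↥C →* State C t × A t × State C (t + 1) :=
  (sigma C t).prod ((evalHom C t).prod (sigma C (t + 1)))

/-- The branch group `B^t = β^t(C)`. -/
def Branch (C : Subgroup (∀ t, A t)) (t : ℤ) :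
    Subgroup (State C t × A t × State C (t + 1)) :=
  (beta C t).range

/-- `β^t` with codomain restricted to the branch group `B^t`. -/
def betaRes (C : Subgroup (∀ t, A t)) (t : ℤ) : ↥C →* ↥(Branch C t) :=
  (beta C t).rangeRestrict

/-- `X_j^t = β^t(C^{(t−j)+})` as a subgroup of the branch group `B^t`. -/
def X (C : Subgroup (∀ t, A t)) (j t : ℤ) : Subgroup ↥(Branch C t) :=
  (Cplus C (t - j)).map (betaRes C t)

/-- `Y_i^t = β^t(C^{(t+i+1)−})` as a subgroup of the branch group `B^t`. -/
def Y (C : Subgroup (∀ t, A t)) (i t : ℤ) : Subgroup ↥(Branch C t) :=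
  (Cminus C (t + i + 1)).map (betaRes C t)

instance X_normal (C : Subgroup (∀ t, A t)) (j t : ℤ) : (X C j t).Normal :=
  (Cplus_normal C (t - j)).map _ (MonoidHom.rangeRestrict_surjective _)

instance Y_normal (C : Subgroup (∀ t, A t)) (i t : ℤ) : (Y C i t).Normal :=
  (Cminus_normal C (t + i + 1)).map _ (MonoidHom.rangeRestrict_surjective _)

/-- `Δ_k^t = X_0^t ∩ Y_k^t`. -/
def Del (C : Subgroup (∀ t, A t)) (k t : ℤ) : Subgroup ↥(Branch C t) :=
  X C 0 t ⊓ Y C k t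

/-- `D_k^t = {a ∈ C : β^t(a) ∈ Δ_k^t}`. -/
def D (C : Subgroup (∀ t, A t)) (k t : ℤ) : Subgroup ↥C :=
  (Del C k t).comap (betaRes C t)

/-- Following-branch operator: for `S ⊆ B^{t₁}`,
`FSet C t₁ t₂ S = {β^{t₂}(a) : a ∈ C, β^{t₁}(a) ∈ S}`. -/
def FSet (C : Subgroup (∀ t, A t)) (t₁ t₂ : ℤ) (S : Set ↥(Branch C t₁)) :
    Set ↥(Branch C t₂) :=
  {x | ∃ a : ↥C, betaRes C t₁ a ∈ S ∧ betaRes C t₂ a = x}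

/-- `π^{[t,t+k]} : C → B^t × ⋯ × B^{t+k}`, `a ↦ (β^t(a), …, β^{t+k}(a))`. -/
def piSeg (C : Subgroup (∀ t, A t)) (t : ℤ) (k : ℕ) :
    ↥C →* ∀ j : Fin (k + 1), ↥(Branch C (t + ((j : ℕ) : ℤ))) where
  toFun a := fun j => betaRes C (t + ((j : ℕ) : ℤ)) a
  map_one' := by funext j; simp
  map_mul' a b := by funext j; simp

/-- `π^{[t,t+k]}(D_m^t)`. -/
def Pseg (C : Subgroup (∀ t, A t)) (t : ℤ) (k : ℕ) (m : ℤ) :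
    Subgroup (∀ j : Fin (k + 1), ↥(Branch C (t + ((j : ℕ) : ℤ)))) :=
  (D C m t).map (piSeg C t k)

/-- `β^{t+j}(D_m^t)` : the image of `D_m^t` in the branch group at time `t + j`. -/
def Qb (C : Subgroup (∀ t, A t)) (t m j : ℤ) : Subgroup ↥(Branch C (t + j)) :=
  (D C m t).map (betaRes C (t + j))

/-- The normal subgroup `C^{[t,t+k−1]}C^{[t+1,t+k]}` of `C` (denominator of the granule). -/
def granN (C : Subgroup (∀ t, A t)) (t : ℤ) (k : ℕ) : Subgroup ↥C :=
  Cint C t (t + k - 1) ⊔ Cint C (t + 1) (t + k)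

instance granN_normal (C : Subgroup (∀ t, A t)) (t : ℤ) (k : ℕ) : (granN C t k).Normal :=
  Subgroup.sup_normal _ _

lemma mem_D_of_mem_Cint (C : Subgroup (∀ t, A t)) (t : ℤ) (k : ℕ) {a : ↥C}
    (ha : a ∈ Cint C t (t + k)) : a ∈ D C (k : ℤ) t := by
  rcases Subgroup.mem_inf.mp ha with ⟨h1, h2⟩
  refine Subgroup.mem_comap.mpr (Subgroup.mem_inf.mpr ⟨?_, ?_⟩)
  · exact Subgroup.mem_map.mpr ⟨a, by simpa using h1, rfl⟩
  · exact Subgroup.mem_map.mpr ⟨a, h2, rfl⟩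

/-- `ℓ`-controllability of the group system `C`. -/
def Controllable (C : Subgroup (∀ t, A t)) (ℓ : ℕ) : Prop :=
  ∀ a b : ↥C, ∀ t : ℤ, ∃ c : ↥C,
    (∀ n < t, (c : ∀ s, A s) n = (a : ∀ s, A s) n) ∧
    (∀ n, t + (ℓ : ℤ) ≤ n → (c : ∀ s, A s) n = (b : ∀ s, A s) n)

/-!
By the modular law for normal subgroups, `ker β^s = C^{s−}C^{(s+1)+}` and, for `m ≥ −1`,
`D_m^t = C^{[t,t+m]} ker β^t`. Hence `D_k^t = C^{[t,t+k]} D_{k−1}^t`, so that `β^{t+j}` maps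
`C^{[t,t+k]}` onto `β^{t+j}(D_k^t)/β^{t+j}(D_{k−1}^t)`, with kernel
`C^{[t,t+k]} ∩ D_{k−1}^t ker β^{t+j}`. For `0 ≤ j ≤ k` the second factor lies between
`C^{[t,t+k−1]}C^{[t+1,t+k]}` and `C^{(t+k)−}C^{(t+1)+}`, and intersecting the latter with
`C^{[t,t+k]}` gives the former back. The kernel is therefore the denominator of the granule, and
the quotient is isomorphic to the granule for every such `j`.
-/

section GroupTheory

variable {G H : Type*} [Group G] [Group H]

lemma sup_inf_assoc_of_normal_of_le {N : Subgroup G} [N.Normal] (K : Subgroup G)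
    {L : Subgroup G} (h : N ≤ L) : (N ⊔ K) ⊓ L = N ⊔ K ⊓ L :=
  SetLike.coe_injective <| by
    rw [Subgroup.normal_mul, Subgroup.mul_inf_assoc _ _ _ h, Subgroup.coe_inf, Subgroup.normal_mul]

/-- The homomorphism `P → f(K)/f(N)` induced by `f` on a subgroup `P ≤ K`. The subgroup `N` need
not lie in `K`: the quotient is by `f(N) ∩ f(K)`. -/
def mapQuotientHom (f : G →* H) {P K : Subgroup G} (hPK : P ≤ K) (N : Subgroup G)
    [(N.map f).Normal] : P →* K.map f ⧸ (N.map f).subgroupOf (K.map f) :=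
  (QuotientGroup.mk' _).comp ((f.subgroupMap K).comp (Subgroup.inclusion hPK))

lemma ker_mapQuotientHom (f : G →* H) {P K : Subgroup G} (hPK : P ≤ K) (N : Subgroup G)
    [(N.map f).Normal] : (mapQuotientHom f hPK N).ker = (N ⊔ f.ker).subgroupOf P := by
  rw [mapQuotientHom, ← MonoidHom.comap_ker, QuotientGroup.ker_mk', ← Subgroup.comap_map_eq]
  rfl

lemma mapQuotientHom_surjective (f : G →* H) {P K N : Subgroup G} (hPK : P ≤ K)
    [(N.map f).Normal] (hK : K ≤ P ⊔ N) : Function.Surjective (mapQuotientHom f hPK N) := by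
  intro q
  obtain ⟨⟨x, hx⟩, rfl⟩ := QuotientGroup.mk_surjective q
  have hx' : x ∈ P.map f ⊔ N.map f := Subgroup.map_sup P N f ▸ Subgroup.map_mono hK hx
  obtain ⟨_, ⟨p, hp, rfl⟩, n, hn, rfl⟩ := Subgroup.mem_sup_of_normal_right.1 hx'
  refine ⟨⟨p, hp⟩, QuotientGroup.eq.2 (Subgroup.mem_subgroupOf.2 ?_)⟩
  simpa using hn

end GroupTheory

section GroupSystem

variable (C : Subgroup (∀ t, A t))

lemma Cplus_antitone : Antitone (Cplus C) :=
  fun _ _ h _ ha n hn => ha n (hn.trans_le h)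

lemma Cminus_monotone : Monotone (Cminus C) :=
  fun _ _ h _ ha n hn => ha n (h.trans hn)

variable {C} in
lemma Cint_le_Cint {t₁ t₂ s₁ s₂ : ℤ} (h₁ : s₁ ≤ t₁) (h₂ : t₂ ≤ s₂) :
    Cint C t₁ t₂ ≤ Cint C s₁ s₂ :=
  inf_le_inf (Cplus_antitone C h₁) (Cminus_monotone C (by lia))

lemma Cplus_inf_ker_evalHom (s : ℤ) : Cplus C s ⊓ (evalHom C s).ker = Cplus C (s + 1) := by
  refine le_antisymm (fun a ha n hn => ?_) (le_inf (Cplus_antitone C (by lia)) fun a ha => ?_)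
  · obtain hn | rfl := (Int.lt_add_one_iff.1 hn).lt_or_eq
    · exact ha.1 n hn
    · exact ha.2
  · exact ha s (lt_add_one s)

lemma ker_betaRes (s : ℤ) : (betaRes C s).ker = Cminus C s ⊔ Cplus C (s + 1) := by
  have hbeta : (betaRes C s).ker = (beta C s).ker := MonoidHom.ker_rangeRestrict _
  have hsigma : ∀ r, (sigma C r).ker = stateN C r := fun r => QuotientGroup.ker_mk' _
  have heval : Cminus C s ≤ (evalHom C s).ker := fun a ha => ha s le_rfl
  have hnext : Cminus C s ⊔ Cplus C (s + 1) ≤ stateN C (s + 1) :=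
    sup_le_sup_right (Cminus_monotone C (by lia)) _
  rw [hbeta, beta, MonoidHom.ker_prod, MonoidHom.ker_prod, hsigma, hsigma, ← inf_assoc,
    stateN, sup_inf_assoc_of_normal_of_le _ heval, Cplus_inf_ker_evalHom, inf_eq_left.2 hnext]

variable {C} in
lemma Cint_inf_sup {t t' s s' : ℤ} (ht : t ≤ t') (hs : s ≤ s') :
    Cint C t s' ⊓ (Cminus C (s + 1) ⊔ Cplus C t') = Cint C t s ⊔ Cint C t' s' := by
  have hle : Cint C t s ≤ Cminus C (s' + 1) :=
    inf_le_right.trans (Cminus_monotone C (by lia))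
  calc Cint C t s' ⊓ (Cminus C (s + 1) ⊔ Cplus C t')
      = (Cplus C t' ⊔ Cminus C (s + 1)) ⊓ Cplus C t ⊓ Cminus C (s' + 1) := by
        rw [inf_comm, sup_comm, inf_assoc, Cint]
    _ = (Cint C t s ⊔ Cplus C t') ⊓ Cminus C (s' + 1) := by
        rw [sup_inf_assoc_of_normal_of_le _ (Cplus_antitone C ht), sup_comm,
          inf_comm (Cminus C (s + 1)), ← Cint]
    _ = Cint C t s ⊔ Cint C t' s' := sup_inf_assoc_of_normal_of_le _ hle

lemma D_eq_Cint_sup_ker {m : ℤ} (hm : -1 ≤ m) (t : ℤ) :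
    D C m t = Cint C t (t + m) ⊔ (betaRes C t).ker := by
  have hminus : Cminus C t ≤ Cminus C (t + m + 1) := Cminus_monotone C (by lia)
  have hplus : Cplus C (t + 1) ≤ Cplus C t := Cplus_antitone C (by lia)
  calc D C m t
      = (Cplus C t ⊔ (betaRes C t).ker) ⊓ (Cminus C (t + m + 1) ⊔ (betaRes C t).ker) := by
        simp only [D, Del, X, Y, Subgroup.comap_inf, Subgroup.comap_map_eq, sub_zero]
    _ = (Cminus C t ⊔ Cplus C t) ⊓ (Cplus C (t + 1) ⊔ Cminus C (t + m + 1)) := by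
        rw [ker_betaRes, sup_left_comm, sup_eq_left.2 hplus, ← sup_assoc, sup_eq_left.2 hminus,
          sup_comm (Cminus C (t + m + 1))]
    _ = Cminus C t ⊔ (Cplus C (t + 1) ⊔ Cminus C (t + m + 1)) ⊓ Cplus C t := by
        rw [sup_inf_assoc_of_normal_of_le _ (hminus.trans le_sup_right), inf_comm (Cplus C t)]
    _ = Cminus C t ⊔ (Cplus C (t + 1) ⊔ Cint C t (t + m)) := by
        rw [sup_inf_assoc_of_normal_of_le _ hplus, inf_comm (Cminus C (t + m + 1)), ← Cint]
    _ = Cint C t (t + m) ⊔ (betaRes C t).ker := by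
        rw [← sup_assoc, sup_comm, ker_betaRes, sup_left_comm, ← sup_assoc]

instance D_normal (m t : ℤ) : (D C m t).Normal := by
  unfold D Del
  infer_instance

instance map_betaRes_normal (N : Subgroup C) [hN : N.Normal] (s : ℤ) :
    (N.map (betaRes C s)).Normal :=
  hN.map _ (MonoidHom.rangeRestrict_surjective _)

instance Qb_normal (t m j : ℤ) : (Qb C t m j).Normal :=
  map_betaRes_normal C (D C m t) (t + j)

variable (t : ℤ) (k : ℕ)

lemma Cint_le_D : Cint C t (t + k) ≤ D C k t :=
  fun _ => mem_D_of_mem_Cint C t k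

lemma D_le_Cint_sup_D : D C k t ≤ Cint C t (t + k) ⊔ D C (k - 1) t := by
  rw [D_eq_Cint_sup_ker C (by lia), D_eq_Cint_sup_ker C (by lia)]
  exact sup_le_sup_left le_sup_right _

lemma granN_le_D : granN C t k ≤ D C (k - 1) t := by
  rw [D_eq_Cint_sup_ker C (by lia), ker_betaRes, ← add_sub_assoc]
  exact sup_le_sup_left (inf_le_left.trans le_sup_right) _

variable {k} in
lemma D_sup_ker_betaRes_le {j : ℕ} (hj : j ≤ k) :
    D C (k - 1) t ⊔ (betaRes C (t + j)).ker ≤ Cminus C (t + k) ⊔ Cplus C (t + 1) := by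
  have hCint : Cint C t (t + (k - 1)) ≤ Cminus C (t + k) :=
    inf_le_right.trans (Cminus_monotone C (by lia))
  rw [D_eq_Cint_sup_ker C (by lia), ker_betaRes, ker_betaRes]
  refine sup_le (sup_le (hCint.trans le_sup_left) ?_) ?_
  · exact sup_le_sup_right (Cminus_monotone C (by lia)) _
  · exact sup_le_sup (Cminus_monotone C (by lia)) (Cplus_antitone C (by lia))

variable {k} in
lemma Cint_inf_D_sup_ker_betaRes {j : ℕ} (hj : j ≤ k) :
    Cint C t (t + k) ⊓ (D C (k - 1) t ⊔ (betaRes C (t + j)).ker) = granN C t k := by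
  refine le_antisymm ?_ (le_inf ?_ ((granN_le_D C t k).trans le_sup_left))
  · refine (inf_le_inf_left _ (D_sup_ker_betaRes_le C t hj)).trans_eq ?_
    rw [granN, ← Cint_inf_sup (by lia) (by lia), sub_add_cancel]
  · exact sup_le (Cint_le_Cint le_rfl (by lia)) (Cint_le_Cint (by lia) le_rfl)

/-- The granule `Γ^{[t,t+k]} = C^{[t,t+k]}/(C^{[t,t+k−1]}C^{[t+1,t+k]})`. -/
abbrev Granule : Type _ :=
  Cint C t (t + k) ⧸ (granN C t k).subgroupOf (Cint C t (t + k))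

/-- The quotient `β^{t+j}(D_k^t)/β^{t+j}(D_{k−1}^t)` of subgroups of the branch group `B^{t+j}`. -/
abbrev BranchQuotient (j : ℕ) : Type _ :=
  Qb C t k j ⧸ (Qb C t (k - 1) j).subgroupOf (Qb C t k j)

/-- The homomorphism `C^{[t,t+k]} → β^{t+j}(D_k^t)/β^{t+j}(D_{k−1}^t)` sending a codeword to the
class of its branch at time `t + j`. -/
def branchQuotientHom (j : ℕ) : Cint C t (t + k) →* BranchQuotient C t k j :=
  mapQuotientHom (betaRes C (t + j)) (Cint_le_D C t k) (D C (k - 1) t)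

lemma branchQuotientHom_surjective (j : ℕ) : Function.Surjective (branchQuotientHom C t k j) :=
  mapQuotientHom_surjective _ _ (D_le_Cint_sup_D C t k)

variable {k} in
lemma ker_branchQuotientHom {j : ℕ} (hj : j ≤ k) :
    (branchQuotientHom C t k j).ker = (granN C t k).subgroupOf (Cint C t (t + k)) := by
  rw [← Cint_inf_D_sup_ker_betaRes C t hj, Subgroup.inf_subgroupOf_left]
  exact ker_mapQuotientHom _ _ _

variable {k} in
/-- The isomorphism from the granule `Γ^{[t,t+k]}` to `β^{t+j}(D_k^t)/β^{t+j}(D_{k−1}^t)` induced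
by `β^{t+j}`. -/
noncomputable def granuleEquivBranchQuotient {j : ℕ} (hj : j ≤ k) :
    Granule C t k ≃* BranchQuotient C t k j :=
  (QuotientGroup.quotientMulEquivOfEq (ker_branchQuotientHom C t hj).symm).trans
    (QuotientGroup.quotientKerEquivOfSurjective _ (branchQuotientHom_surjective C t k j))

end GroupSystem

/-- Let `S ⊆ C^{[t,t+k]}` be a transversal of the granule (the quotient
map restricted to `S` is a bijection onto `Γ^{[t,t+k]}`). Then for `0 ≤ j ≤ k`:
`β^{t+j}(D_{k−1}^t)` is normal in `β^{t+j}(D_k^t)`, each `β^{t+j}(a)` for `a ∈ S` lies in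
`β^{t+j}(D_k^t)`, and `a ↦ β^{t+j}(a)·β^{t+j}(D_{k−1}^t)` is a bijection from `S` onto
`β^{t+j}(D_k^t)/β^{t+j}(D_{k−1}^t)`; moreover all these quotients for `0 ≤ j ≤ k` have
the same number of elements. -/
theorem statement16 (C : Subgroup (∀ t, A t)) (t : ℤ) (k : ℕ) (hk : 1 ≤ k)
    (S : Set ↥(Cint C t (t + (k : ℤ))))
    (hS : Set.BijOn
      (fun a : ↥(Cint C t (t + (k : ℤ))) =>
        (QuotientGroup.mk a :
          ↥(Cint C t (t + (k : ℤ))) ⧸ (granN C t k).subgroupOf (Cint C t (t + (k : ℤ)))))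
      S Set.univ) :
    (∀ j : ℕ, j ≤ k →
      ((Qb C t ((k : ℤ) - 1) (j : ℤ)).subgroupOf (Qb C t (k : ℤ) (j : ℤ))).Normal ∧
      (∀ a : ↥(Cint C t (t + (k : ℤ))), a ∈ S →
        betaRes C (t + (j : ℤ)) (a : ↥C) ∈ Qb C t (k : ℤ) (j : ℤ)) ∧
      Set.BijOn
        (fun a : ↥(Cint C t (t + (k : ℤ))) =>
          (QuotientGroup.mk
            (⟨betaRes C (t + (j : ℤ)) (a : ↥C),
              Subgroup.mem_map_of_mem _ (mem_D_of_mem_Cint C t k a.2)⟩ :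
              ↥(Qb C t (k : ℤ) (j : ℤ))) :
            ↥(Qb C t (k : ℤ) (j : ℤ)) ⧸
              (Qb C t ((k : ℤ) - 1) (j : ℤ)).subgroupOf (Qb C t (k : ℤ) (j : ℤ))))
        S Set.univ) ∧
    (∀ j j' : ℕ, j ≤ k → j' ≤ k →
      Nat.card
          (↥(Qb C t (k : ℤ) (j : ℤ)) ⧸
            (Qb C t ((k : ℤ) - 1) (j : ℤ)).subgroupOf (Qb C t (k : ℤ) (j : ℤ))) =
        Nat.card
          (↥(Qb C t (k : ℤ) (j' : ℤ)) ⧸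
            (Qb C t ((k : ℤ) - 1) (j' : ℤ)).subgroupOf (Qb C t (k : ℤ) (j' : ℤ)))) := by
  refine ⟨fun j hj => ⟨inferInstance, fun a _ => ?_, ?_⟩, fun j j' hj hj' => ?_⟩
  · exact Subgroup.mem_map_of_mem _ (mem_D_of_mem_Cint C t k a.2)
  · exact (granuleEquivBranchQuotient C t hj).bijective.bijOn_univ.comp hS
  · exact Nat.card_congr ((granuleEquivBranchQuotient C t hj).symm.trans
      (granuleEquivBranchQuotient C t hj')).toEquiv

end GroupSystemPaper
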